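/- arXiv:2208.10158 — 3 statements merged into one kernel-verified Lean document; each statement's English description precedes it below -/
import Mathlib

section
/- Let (Ω, 𝒜, ℙ) be a probability space, d* ≥ 1 a natural number, q ∈ ℝ, 0 < α < 1, and for each T ∈ ℕ and each natural number d ≥ 1 let T̂_{T,d} be a real random variable. Assume: (a) for every d with 1 ≤ d < d* and every C ∈ ℝ, ℙ(T̂_{T,d} > C) → 0 as T → ∞; (b) either for every C ∈ ℝ one has ℙ(T̂_{T,d*} ≤ C) → 0, or T̂_{T,d*} converges in distribution to a Borel probability measure μ on ℝ with μ({q}) = 0 and μ((−∞, q]) = α. Define the estimator d̂_T as the least d ≥ 1 with T̂_{T,d} > q, with the convention d̂_T = +∞ (an element of ℕ ∪ {∞}) if no such d exists. Then lim_{T→∞} ℙ(d̂_T < d*) = 0 and limsup_{T→∞} ℙ(d̂_T > d*) ≤ α. -/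
open MeasureTheory Filter Topology

/-!
Both claims are event inclusions. If `d̂_T < d*`, then `T̂_{T,d} > q` for some `1 ≤ d < d*`, so the
probability is bounded by a finite sum of terms tending to `0`. If `d̂_T > d*`, then `d*` itself is
not a candidate, so `T̂_{T,d*} ≤ q`; the probability of this event tends to `0` in the first case
of the alternative and to `μ (Iic q) = α` in the second, since `q` is a continuity point of `μ`.
-/

section

variable {Ω β ι : Type*}

/-- The estimator `d̂` of the minimal model complexity computed from the observed statistics
`x d`: the least `d ≥ 1` with `x d > q`. It takes values in `ℕ∞`, where `sInf ∅ = ⊤` provides the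
convention `d̂ = ∞` if there is no such `d`; the value `x 0` is ignored. -/
noncomputable def complexityEstimator [LT β] (q : β) (x : ℕ → β) : ℕ∞ :=
  sInf {m : ℕ∞ | ∃ d : ℕ, m = (d : ℕ∞) ∧ 1 ≤ d ∧ q < x d}

theorem complexityEstimator_lt_natCast_iff [LT β] {q : β} {x : ℕ → β} {n : ℕ} :
    complexityEstimator q x < n ↔ ∃ d ∈ Finset.Ico 1 n, q < x d := by
  simp only [complexityEstimator, sInf_lt_iff, Finset.mem_Ico]
  constructor
  · rintro ⟨_, ⟨d, rfl, hd, hqd⟩, hdn⟩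
    exact ⟨d, ⟨hd, Nat.cast_lt.1 hdn⟩, hqd⟩
  · rintro ⟨d, ⟨hd, hdn⟩, hqd⟩
    exact ⟨d, ⟨d, rfl, hd, hqd⟩, Nat.cast_lt.2 hdn⟩

theorem complexityEstimator_le_natCast [LT β] {q : β} {x : ℕ → β} {d : ℕ} (hd : 1 ≤ d)
    (hqd : q < x d) : complexityEstimator q x ≤ d :=
  sInf_le ⟨d, rfl, hd, hqd⟩

theorem le_of_natCast_lt_complexityEstimator [LinearOrder β] {q : β} {x : ℕ → β} {d : ℕ}
    (hd : 1 ≤ d) (h : d < complexityEstimator q x) : x d ≤ q :=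
  not_lt.1 fun hqd => h.not_ge (complexityEstimator_le_natCast hd hqd)

variable [MeasurableSpace Ω] (P : Measure Ω)

theorem measure_complexityEstimator_lt_le_sum [LT β] (q : β) (X : ℕ → Ω → β) (n : ℕ) :
    P {ω | complexityEstimator q (X · ω) < n} ≤ ∑ d ∈ Finset.Ico 1 n, P {ω | q < X d ω} :=
  calc
    P {ω | complexityEstimator q (X · ω) < n}
      = P (⋃ d ∈ Finset.Ico 1 n, {ω | q < X d ω}) := by
        congr 1
        ext ω
        simp only [Set.mem_ofPred_eq, Set.mem_iUnion, exists_prop,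
          complexityEstimator_lt_natCast_iff]
    _ ≤ ∑ d ∈ Finset.Ico 1 n, P {ω | q < X d ω} := measure_biUnion_finset_le _ _

theorem measure_lt_complexityEstimator_le [LinearOrder β] (q : β) (X : ℕ → Ω → β) {n : ℕ}
    (hn : 1 ≤ n) : P {ω | n < complexityEstimator q (X · ω)} ≤ P {ω | X n ω ≤ q} :=
  measure_mono fun _ h => le_of_natCast_lt_complexityEstimator hn h

variable {P} {l : Filter ι}

theorem tendsto_measure_complexityEstimator_lt [LT β] {q : β} {X : ι → ℕ → Ω → β} {n : ℕ}
    (h : ∀ d, 1 ≤ d → d < n → Tendsto (fun i => P {ω | q < X i d ω}) l (𝓝 0)) :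
    Tendsto (fun i => P {ω | complexityEstimator q (X i · ω) < n}) l (𝓝 0) := by
  have hsum : Tendsto (fun i => ∑ d ∈ Finset.Ico 1 n, P {ω | q < X i d ω}) l (𝓝 0) := by
    rw [← Finset.sum_const_zero (s := Finset.Ico 1 n)]
    exact tendsto_finsetSum _ fun d hd =>
      h d (Finset.mem_Ico.1 hd).1 (Finset.mem_Ico.1 hd).2
  exact tendsto_of_tendsto_of_tendsto_of_le_of_le tendsto_const_nhds hsum (fun _ => zero_le)
    fun i => measure_complexityEstimator_lt_le_sum P q (X i) n

theorem limsup_measure_lt_complexityEstimator_le [LinearOrder β] (q : β) (X : ι → ℕ → Ω → β)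
    {n : ℕ} (hn : 1 ≤ n) :
    limsup (fun i => P {ω | n < complexityEstimator q (X i · ω)}) l ≤
      limsup (fun i => P {ω | X i n ω ≤ q}) l :=
  limsup_le_limsup (Eventually.of_forall fun i => measure_lt_complexityEstimator_le P q (X i) hn)

theorem complexity_estimator_consistency_general [LinearOrder β] {dstar : ℕ} (hdstar : 1 ≤ dstar)
    {q : β} {α : ENNReal} {That : ι → ℕ → Ω → β}
    (ha : ∀ d, 1 ≤ d → d < dstar → Tendsto (fun i => P {ω | q < That i d ω}) l (𝓝 0))
    (hb : limsup (fun i => P {ω | That i dstar ω ≤ q}) l ≤ α) :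
    Tendsto (fun i => P {ω | complexityEstimator q (That i · ω) < dstar}) l (𝓝 0) ∧
      limsup (fun i => P {ω | dstar < complexityEstimator q (That i · ω)}) l ≤ α :=
  ⟨tendsto_measure_complexityEstimator_lt ha,
    (limsup_measure_lt_complexityEstimator_le q That hdstar).trans hb⟩

end

/-- Theorem 4.3 of the paper: consistency of the estimator
`d̂_T = min {d ≥ 1 : T̂_{T,d} > q}` (with the convention `d̂_T = ∞` if no such `d`
exists) of the minimal model complexity `d*`:
`ℙ(d̂_T < d*) → 0` and `limsup_T ℙ(d̂_T > d*) ≤ α`. -/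
theorem complexity_estimator_consistency
    {Ω : Type*} [MeasurableSpace Ω] (P : Measure Ω) [IsProbabilityMeasure P]
    (dstar : ℕ) (hdstar : 1 ≤ dstar) (q α : ℝ) (hα0 : 0 < α) (hα1 : α < 1)
    (That : ℕ → ℕ → Ω → ℝ)
    (ha : ∀ d : ℕ, 1 ≤ d → d < dstar → ∀ C : ℝ,
      Tendsto (fun T => P {ω | C < That T d ω}) atTop (𝓝 0))
    (hb : (∀ C : ℝ, Tendsto (fun T => P {ω | That T dstar ω ≤ C}) atTop (𝓝 0)) ∨
      (∃ μ : Measure ℝ, IsProbabilityMeasure μ ∧ μ {q} = 0 ∧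
        μ (Set.Iic q) = ENNReal.ofReal α ∧
        ∀ t : ℝ, μ {t} = 0 →
          Tendsto (fun T => P {ω | That T dstar ω ≤ t}) atTop (𝓝 (μ (Set.Iic t))))) :
    Tendsto
      (fun T => P {ω |
        sInf {m : ℕ∞ | ∃ d : ℕ, m = (d : ℕ∞) ∧ 1 ≤ d ∧ q < That T d ω} < (dstar : ℕ∞)})
      atTop (𝓝 0) ∧
    Filter.limsup
      (fun T => P {ω |
        (dstar : ℕ∞) < sInf {m : ℕ∞ | ∃ d : ℕ, m = (d : ℕ∞) ∧ 1 ≤ d ∧ q < That T d ω}})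
      atTop ≤ ENNReal.ofReal α := by
  refine complexity_estimator_consistency_general hdstar (fun d h1 hd => ha d h1 hd q) ?_
  rcases hb with h | ⟨μ, _, hμq, hμα, h⟩
  · exact (h q).limsup_eq.trans_le zero_le
  · exact ((h q hμq).limsup_eq.trans hμα).le
end

section
/- Let (Ω, 𝒜, ℙ) be a probability space, d* ≥ 1 and d₀ ≥ 1 natural numbers, q ∈ ℝ, 0 < α < 1, and for each T ∈ ℕ and each natural number d ≥ 1 let T̂_{T,d} be a real random variable. Assume: (a) for every d with 1 ≤ d < d* and every C ∈ ℝ, ℙ(T̂_{T,d} > C) → 0 as T → ∞; (b) either for every C ∈ ℝ one has ℙ(T̂_{T,d*} ≤ C) → 0, or T̂_{T,d*} converges in distribution to a Borel probability measure μ on ℝ with μ({q}) = 0 and μ((−∞, q]) = α. Define d̂_T as the least d ≥ 1 with T̂_{T,d} > q, with d̂_T = +∞ if no such d exists. Consider the test that rejects the null hypothesis H₀ : d* ≤ d₀ whenever d̂_T > d₀. Then this test has asymptotic level α and is consistent: if d* ≤ d₀ then limsup_{T→∞} ℙ(d̂_T > d₀) ≤ α, and if d* > d₀ then ℙ(d̂_T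 > d₀) → 1 as T → ∞. -/
open MeasureTheory Filter Topology

/-!
The test rejects exactly when none of the statistics with index `1 ≤ d ≤ d₀` exceeds `q`. If
`d* ≤ d₀`, rejection forces `T̂_{T,d*} ≤ q`, an event whose probability tends to `0` or to `α`. If
`d₀ < d*`, acceptance is the union over `1 ≤ d ≤ d₀` of the events `T̂_{T,d} > q`, each of
vanishing probability. Only monotonicity and subadditivity of the probability enter, so the
statistics need not be measurable and an outer measure suffices.
-/

section OuterMeasure

variable {ι Ω F : Type*} [FunLike F (Set Ω) ENNReal] [OuterMeasureClass F Ω] {μ : F} {l : Filter ι}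

lemma tendsto_measure_biUnion_finset_zero {κ : Type*} {s : Finset κ} {A : ι → κ → Set Ω}
    (hA : ∀ k ∈ s, Tendsto (fun i => μ (A i k)) l (𝓝 0)) :
    Tendsto (fun i => μ (⋃ k ∈ s, A i k)) l (𝓝 0) := by
  have hsum : Tendsto (fun i => ∑ k ∈ s, μ (A i k)) l (𝓝 0) := by
    simpa using tendsto_finsetSum s hA
  exact tendsto_of_tendsto_of_tendsto_of_le_of_le tendsto_const_nhds hsum
    (fun _ => zero_le) fun i => measure_biUnion_finset_le s (A i)

lemma tendsto_measure_univ_of_tendsto_measure_compl_zero {A : ι → Set Ω}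
    (hA : Tendsto (fun i => μ (A i)ᶜ) l (𝓝 0)) :
    Tendsto (fun i => μ (A i)) l (𝓝 (μ Set.univ)) := by
  have hlower : Tendsto (fun i => μ Set.univ - μ (A i)ᶜ) l (𝓝 (μ Set.univ)) := by
    simpa using ENNReal.Tendsto.sub tendsto_const_nhds hA (.inr ENNReal.zero_ne_top)
  refine tendsto_of_tendsto_of_tendsto_of_le_of_le hlower tendsto_const_nhds
    (fun i => tsub_le_iff_right.2 ?_) fun i => measure_mono (Set.subset_univ _)
  calc μ Set.univ = μ (A i ∪ (A i)ᶜ) := by rw [Set.union_compl_self]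
    _ ≤ μ (A i) + μ (A i)ᶜ := measure_union_le _ _

end OuterMeasure

/-- The least index `d ≥ 1` at which the sequence `x` exceeds `q`, with value `⊤` if there is none.
For `x d = T̂_{T,d}` this is the estimator `d̂_T` of the minimal model complexity. -/
noncomputable def firstExceedance {β : Type*} [LT β] (q : β) (x : ℕ → β) : ℕ∞ :=
  sInf {m : ℕ∞ | ∃ d : ℕ, m = (d : ℕ∞) ∧ 1 ≤ d ∧ q < x d}

section FirstExceedance

variable {β : Type*} [LinearOrder β] {n : ℕ} {q : β}

lemma natCast_lt_firstExceedance_iff {x : ℕ → β} :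
    (n : ℕ∞) < firstExceedance q x ↔ ∀ d ∈ Finset.Icc 1 n, x d ≤ q := by
  have hiff : (n : ℕ∞) < firstExceedance q x ↔ ∀ d : ℕ, 1 ≤ d → q < x d → n < d := by
    rw [firstExceedance, ← ENat.add_one_le_iff (ENat.natCast_ne_top n), le_sInf_iff]
    constructor
    · exact fun h d hd hq => by exact_mod_cast h d ⟨d, rfl, hd, hq⟩
    · rintro h _ ⟨d, rfl, hd, hq⟩
      exact_mod_cast h d hd hq
  refine hiff.trans (forall_congr' fun d => ?_)
  grind

variable {ι Ω F : Type*} [FunLike F (Set Ω) ENNReal] [OuterMeasureClass F Ω] {μ : F} {l : Filter ι}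
  {X : ι → ℕ → Ω → β}

lemma limsup_measure_lt_firstExceedance_le {d : ℕ} (hd : d ∈ Finset.Icc 1 n) :
    limsup (fun i => μ {ω | (n : ℕ∞) < firstExceedance q (X i · ω)}) l ≤
      limsup (fun i => μ {ω | X i d ω ≤ q}) l :=
  limsup_le_limsup <| Eventually.of_forall fun _ =>
    measure_mono fun _ hω => natCast_lt_firstExceedance_iff.1 hω d hd

lemma tendsto_measure_lt_firstExceedance
    (hX : ∀ d ∈ Finset.Icc 1 n, Tendsto (fun i => μ {ω | q < X i d ω}) l (𝓝 0)) :
    Tendsto (fun i => μ {ω | (n : ℕ∞) < firstExceedance q (X i · ω)}) l (𝓝 (μ Set.univ)) := by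
  have hcompl (i : ι) : {ω | (n : ℕ∞) < firstExceedance q (X i · ω)}ᶜ =
      ⋃ d ∈ Finset.Icc 1 n, {ω | q < X i d ω} := by
    ext ω
    simp [natCast_lt_firstExceedance_iff, and_assoc]
  apply tendsto_measure_univ_of_tendsto_measure_compl_zero
  simpa only [hcompl] using tendsto_measure_biUnion_finset_zero hX

end FirstExceedance

/-- Theorem 4.4 of the paper: the test that rejects `H₀ : d* ≤ d₀` whenever
`d̂_T > d₀` (where `d̂_T = min {d ≥ 1 : T̂_{T,d} > q}`, `= ∞` if no such `d` exists)
has asymptotic level `α` and is consistent. -/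
theorem complexity_test_level_and_consistency
    {Ω : Type*} [MeasurableSpace Ω] (P : Measure Ω) [IsProbabilityMeasure P]
    (dstar d₀ : ℕ) (hdstar : 1 ≤ dstar) (hd₀ : 1 ≤ d₀)
    (q α : ℝ) (hα0 : 0 < α) (hα1 : α < 1)
    (That : ℕ → ℕ → Ω → ℝ)
    (ha : ∀ d : ℕ, 1 ≤ d → d < dstar → ∀ C : ℝ,
      Tendsto (fun T => P {ω | C < That T d ω}) atTop (𝓝 0))
    (hb : (∀ C : ℝ, Tendsto (fun T => P {ω | That T dstar ω ≤ C}) atTop (𝓝 0)) ∨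
      (∃ μ : Measure ℝ, IsProbabilityMeasure μ ∧ μ {q} = 0 ∧
        μ (Set.Iic q) = ENNReal.ofReal α ∧
        ∀ t : ℝ, μ {t} = 0 →
          Tendsto (fun T => P {ω | That T dstar ω ≤ t}) atTop (𝓝 (μ (Set.Iic t))))) :
    (dstar ≤ d₀ →
      Filter.limsup
        (fun T => P {ω |
          (d₀ : ℕ∞) < sInf {m : ℕ∞ | ∃ d : ℕ, m = (d : ℕ∞) ∧ 1 ≤ d ∧ q < That T d ω}})
        atTop ≤ ENNReal.ofReal α) ∧
    (d₀ < dstar →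
      Tendsto
        (fun T => P {ω |
          (d₀ : ℕ∞) < sInf {m : ℕ∞ | ∃ d : ℕ, m = (d : ℕ∞) ∧ 1 ≤ d ∧ q < That T d ω}})
        atTop (𝓝 1)) := by
  constructor
  · intro hle
    have hlimsup : limsup (fun T => P {ω | That T dstar ω ≤ q}) atTop ≤ ENNReal.ofReal α := by
      rcases hb with hzero | ⟨μ, -, hq, hμ, hlaw⟩
      · exact (hzero q).limsup_eq.trans_le zero_le
      · exact ((hlaw q hq).limsup_eq.trans hμ).le
    exact (limsup_measure_lt_firstExceedance_le (Finset.mem_Icc.2 ⟨hdstar, hle⟩)).trans hlimsup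
  · intro hlt
    rw [← measure_univ (μ := P)]
    refine tendsto_measure_lt_firstExceedance fun d hd => ?_
    obtain ⟨hd_one, hd_le⟩ := Finset.mem_Icc.1 hd
    exact ha d hd_one (hd_le.trans_lt hlt) q
end

section
/- Let H be a complex Hilbert space and let B, B̂ : H → H be bounded self-adjoint operators. Let λ, λ̂ ∈ ℝ and let φ, φ̂ ∈ H be unit vectors with B φ = λ φ and B̂ φ̂ = λ̂ φ̂. Let P := φ ⊗ φ and P̂ := φ̂ ⊗ φ̂ be the corresponding rank-one orthogonal projections, v ↦ ⟪φ, v⟫ φ and v ↦ ⟪φ̂, v⟫ φ̂. Then the exact perturbation identity λ̂ − λ = ⟪φ, (B̂ − B) φ⟫ + ⟪φ, ((B̂ − B) − (λ̂ − λ)·Id)((P̂ − P) φ)⟫ holds, where Id is the identity operator on H. -/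
open scoped ComplexInnerProductSpace

/-!
Let `T = (B̂ - B) - (λ̂ - λ)`. On an eigenvector `v` of `B̂` it agrees with `λ - B`, whose range is
orthogonal to the eigenvector `φ` because `B` is symmetric. Hence `⟪φ, T v⟫ = 0`, so
`⟪φ, T (v - φ)⟫ = -⟪φ, T φ⟫`, and for a unit vector `φ` this is `(λ̂ - λ) - ⟪φ, (B̂ - B) φ⟫`.
The perturbation identity is the case `v = P̂ φ`.
-/

section SymmetricPerturbation

open Module.End

variable {𝕜 E : Type*} [RCLike 𝕜] [NormedAddCommGroup E] [InnerProductSpace 𝕜 E]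
  {B Bh : E →ₗ[𝕜] E} {lam lamh : 𝕜} {φ v : E}

theorem inner_apply_eq_mul_inner_of_mem_eigenspace (hB : B.IsSymmetric)
    (hφ : φ ∈ eigenspace B lam) (ψ : E) : inner 𝕜 φ (B ψ) = lam * inner 𝕜 φ ψ := by
  rcases eq_or_ne φ 0 with rfl | hφ₀
  · simp
  have hreal : starRingEnd 𝕜 lam = lam :=
    hB.conj_eigenvalue_eq_self (hasEigenvalue_of_hasEigenvector ⟨hφ, hφ₀⟩)
  rw [← hB φ ψ, mem_eigenspace_iff.mp hφ, inner_smul_left, hreal]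

theorem inner_perturbation_sub_smul_eq_zero (hB : B.IsSymmetric)
    (hφ : φ ∈ eigenspace B lam) (hv : v ∈ eigenspace Bh lamh) :
    inner 𝕜 φ ((Bh - B) v - (lamh - lam) • v) = 0 := by
  have hresidual : (Bh - B) v - (lamh - lam) • v = lam • v - B v := by
    rw [LinearMap.sub_apply, mem_eigenspace_iff.mp hv]
    module
  rw [hresidual, inner_sub_right, inner_smul_right,
    inner_apply_eq_mul_inner_of_mem_eigenspace hB hφ, sub_self]

theorem eigenvalue_perturbation_identity_general (hB : B.IsSymmetric) (hφ_norm : ‖φ‖ = 1)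
    (hφ : φ ∈ eigenspace B lam) (hv : v ∈ eigenspace Bh lamh) :
    lamh - lam =
      inner 𝕜 φ ((Bh - B) φ) +
        inner 𝕜 φ ((Bh - B) (v - φ) - (lamh - lam) • (v - φ)) := by
  have hφ_inner : inner 𝕜 φ φ = 1 := inner_self_eq_one_of_norm_eq_one hφ_norm
  have hsplit : (Bh - B) (v - φ) - (lamh - lam) • (v - φ) =
      ((Bh - B) v - (lamh - lam) • v) - ((Bh - B) φ - (lamh - lam) • φ) := by
    rw [map_sub]
    module
  rw [hsplit, inner_sub_right, inner_perturbation_sub_smul_eq_zero hB hφ hv,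
    inner_sub_right, inner_smul_right, hφ_inner]
  ring

end SymmetricPerturbation

/-- Proposition D.1 of the paper for a simple eigenvalue: the exact
eigenvalue-perturbation identity
`λ̂ − λ = ⟪φ, (B̂−B)φ⟫ + ⟪φ, ((B̂−B) − (λ̂−λ)·Id)((P̂−P)φ)⟫` for unit eigenvectors
`φ, φ̂` of the bounded self-adjoint operators `B, B̂` with eigenvalues `λ, λ̂`, where
`P = φ⊗φ` and `P̂ = φ̂⊗φ̂` are the rank-one eigenprojections. -/
theorem eigenvalue_perturbation_identity
    {H : Type*} [NormedAddCommGroup H] [InnerProductSpace ℂ H] [CompleteSpace H]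
    (B Bh : H →L[ℂ] H) (hB : IsSelfAdjoint B) (hBh : IsSelfAdjoint Bh)
    (lam lamh : ℝ) (φ φh : H) (hφ : ‖φ‖ = 1) (hφh : ‖φh‖ = 1)
    (heig : B φ = (lam : ℂ) • φ) (heigh : Bh φh = (lamh : ℂ) • φh) :
    ((lamh : ℂ) - (lam : ℂ)) =
      ⟪φ, (Bh - B) φ⟫ +
        ⟪φ, (Bh - B) (⟪φh, φ⟫ • φh - ⟪φ, φ⟫ • φ)
            - ((lamh : ℂ) - (lam : ℂ)) • (⟪φh, φ⟫ • φh - ⟪φ, φ⟫ • φ)⟫ := by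
  rw [inner_self_eq_one_of_norm_eq_one hφ, one_smul]
  exact eigenvalue_perturbation_identity_general hB.isSymmetric hφ
    (Module.End.mem_eigenspace_iff.mpr heig)
    (Submodule.smul_mem _ _ (Module.End.mem_eigenspace_iff.mpr heigh))
end
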